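/- Let T ≥ 1, m ≥ 1 and ℐ = {1,…,m}. For each j ∈ ℐ let 𝒩^j_0, …, 𝒩^j_T be nonempty subsets of 𝒩 with 𝒩^j_0 a singleton and 𝒩^j_T = 𝒩. For each k ∈ 𝒩, j ∈ ℐ and t ∈ {0,…,T−1} let 𝒩^{k,j}_t ⊆ 𝒩^j_t be sets with 𝒩^{k,j}_t ∩ 𝒩^{k,j'}_t = ∅ whenever j ≠ j'. Let numbers α_{i,j}(t) ∈ [0,1] satisfy: for all t ∈ {0,…,T−1}, all i,j ∈ ℐ and every k ∈ 𝒩^i_{t+1}, Σ_{l∈𝒩^{k,j}_t} γ_{k,l}(t) ≥ α_{i,j}(t). Then: (i) each m×m matrix A(t) = (α_{i,j}(t))_{i,j∈ℐ} is sub-stochastic (nonnegative entries, every row sum at most 1); (ii) every solution x of the consensus system satisfies Δ(T) ≤ (1 − max_{j∈ℐ} Σ_{i∈ℐ} (A(T−1)·A(T−2)···A(0))_{j,i})·Δ(0). -/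

import Mathlib

/-- The diameter of a finite family of reals: max minus min. -/
noncomputable def diam {N : Type*} [Fintype N] [Nonempty N] (y : N → ℝ) : ℝ :=
  Finset.univ.sup' Finset.univ_nonempty y - Finset.univ.inf' Finset.univ_nonempty y

/-- The ordered (time-decreasing) product `A(T-1) ⬝ A(T-2) ⬝ ⋯ ⬝ A(0)`. -/
noncomputable def prodRev {m : ℕ} (A : ℕ → Matrix (Fin m) (Fin m) ℝ) :
    ℕ → Matrix (Fin m) (Fin m) ℝ
  | 0 => 1
  | t + 1 => A t * prodRev A t

/-- Summing a nonnegative function over pairwise disjoint finsets gives at most the total sum. -/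
theorem sum_sum_le_sum_univ_of_disjoint {ι N : Type*} [Fintype ι] [Fintype N]
    (s : ι → Finset N) (hs : ∀ i j, i ≠ j → Disjoint (s i) (s j))
    (f : N → ℝ) (hf : ∀ l, 0 ≤ f l) :
    ∑ j, ∑ l ∈ s j, f l ≤ ∑ l, f l := by
  classical
  rw [← Finset.sum_biUnion fun i _ j _ hij => hs i j hij]
  exact Finset.sum_le_sum_of_subset_of_nonneg (Finset.subset_univ _) fun l _ _ => hf l

/-- A nonnegative solution of `y (t + 1) = Γ t *ᵥ y t` is bounded below on the layer `Ns i t` of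
the `i`-th tree by the `i`-th coordinate of `A (t - 1) * ⋯ * A 0` applied to the root values. -/
theorem prodRev_mulVec_root_le {N : Type*} [Fintype N] (Γ : ℕ → Matrix N N ℝ)
    (hnn : ∀ t k l, 0 ≤ Γ t k l) (T m : ℕ)
    (Ns : Fin m → ℕ → Finset N) (root : Fin m → N) (hN0 : ∀ j, Ns j 0 = {root j})
    (Nk : N → Fin m → ℕ → Finset N)
    (hNk : ∀ k j t, t < T → Nk k j t ⊆ Ns j t)
    (hdisj : ∀ k j j' t, t < T → j ≠ j' → Disjoint (Nk k j t) (Nk k j' t))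
    (A : ℕ → Matrix (Fin m) (Fin m) ℝ) (hA : ∀ t < T, ∀ i j, 0 ≤ A t i j)
    (hmain : ∀ t < T, ∀ i j : Fin m, ∀ k ∈ Ns i (t + 1), A t i j ≤ ∑ l ∈ Nk k j t, Γ t k l)
    (y : ℕ → N → ℝ) (hy : ∀ t, y (t + 1) = (Γ t).mulVec (y t)) (hy0 : ∀ k, 0 ≤ y 0 k)
    (t : ℕ) (ht : t ≤ T) :
    (∀ k, 0 ≤ y t k) ∧ ∀ i, 0 ≤ (prodRev A t).mulVec (fun j => y 0 (root j)) i ∧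
      ∀ k ∈ Ns i t, (prodRev A t).mulVec (fun j => y 0 (root j)) i ≤ y t k := by
  induction t with
  | zero => simp [prodRev, hN0, hy0]
  | succ t ih =>
    obtain ⟨ihy, ihL⟩ := ih (by omega)
    have ht' : t < T := ht
    have hterm : ∀ k l, 0 ≤ Γ t k l * y t l := fun k l => mul_nonneg (hnn t k l) (ihy l)
    simp only [prodRev, ← Matrix.mulVec_mulVec, hy t]
    generalize (prodRev A t).mulVec (fun j => y 0 (root j)) = L at ihL ⊢
    simp only [Matrix.mulVec, dotProduct]
    refine ⟨fun k => Finset.sum_nonneg fun l _ => hterm k l, fun i =>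
      ⟨Finset.sum_nonneg fun j _ => mul_nonneg (hA t ht' i j) (ihL j).1, fun k hk => ?_⟩⟩
    refine le_trans ?_ (sum_sum_le_sum_univ_of_disjoint (fun j => Nk k j t)
      (fun j j' h => hdisj k j j' t ht' h) _ (hterm k))
    refine Finset.sum_le_sum fun j _ => ?_
    refine (mul_le_mul_of_nonneg_right (hmain t ht' i j k hk) (ihL j).1).trans ?_
    rw [Finset.sum_mul]
    exact Finset.sum_le_sum fun l hl =>
      mul_le_mul_of_nonneg_left ((ihL j).2 l (hNk k j t ht' hl)) (hnn t k l)

/-- Lemma 3 of the paper: contraction estimate along `m` settling spanning-trees.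
(i) each matrix `A(t) = (α_{i,j}(t))` is sub-stochastic;
(ii) `Δ(T) ≤ (1 - max_j Σ_i (A(T-1)⋯A(0))_{j,i}) Δ(0)`. -/
theorem diam_contraction_multiple_trees
    {N : Type*} [Fintype N] [Nonempty N]
    (Γ : ℕ → Matrix N N ℝ)
    (hnn : ∀ t k l, 0 ≤ Γ t k l)
    (hrow : ∀ t k, ∑ l, Γ t k l = 1)
    (T m : ℕ) (hT : 1 ≤ T) (hm : 1 ≤ m)
    (Ns : Fin m → ℕ → Finset N) (root : Fin m → N)
    (hNne : ∀ j t, t ≤ T → (Ns j t).Nonempty)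
    (hN0 : ∀ j, Ns j 0 = {root j})
    (hNT : ∀ j, Ns j T = Finset.univ)
    (Nk : N → Fin m → ℕ → Finset N)
    (hNk : ∀ k j t, t < T → Nk k j t ⊆ Ns j t)
    (hdisj : ∀ k j j' t, t < T → j ≠ j' → Disjoint (Nk k j t) (Nk k j' t))
    (α : Fin m → Fin m → ℕ → ℝ)
    (hα : ∀ i j t, t < T → α i j t ∈ Set.Icc (0 : ℝ) 1)
    (hmain : ∀ t < T, ∀ i j : Fin m, ∀ k ∈ Ns i (t + 1),
      α i j t ≤ ∑ l ∈ Nk k j t, Γ t k l)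
    (x : ℕ → N → ℝ)
    (hx : ∀ t, x (t + 1) = (Γ t).mulVec (x t)) :
    (∀ t < T, (∀ i j, 0 ≤ α i j t) ∧ (∀ i, ∑ j, α i j t ≤ 1)) ∧
    diam (x T) ≤
      (1 - Finset.univ.sup' (Finset.univ_nonempty_iff.mpr ⟨⟨0, hm⟩⟩)
        (fun j : Fin m =>
          ∑ i, prodRev (fun t => Matrix.of fun i' j' => α i' j' t) T j i)) * diam (x 0) := by
  refine ⟨fun t ht => ⟨fun i j => (hα i j t ht).1, fun i => ?_⟩, ?_⟩
  · obtain ⟨k, hk⟩ := hNne i (t + 1) ht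
    calc ∑ j, α i j t ≤ ∑ j, ∑ l ∈ Nk k j t, Γ t k l :=
          Finset.sum_le_sum fun j _ => hmain t ht i j k hk
      _ ≤ ∑ l, Γ t k l := sum_sum_le_sum_univ_of_disjoint (fun j => Nk k j t)
          (fun j j' h => hdisj k j j' t ht h) _ (hnn t k)
      _ = 1 := hrow t k
  · set A : ℕ → Matrix (Fin m) (Fin m) ℝ := fun t => Matrix.of fun i' j' => α i' j' t
    obtain ⟨i, -, hi⟩ := Finset.exists_mem_eq_sup' (Finset.univ_nonempty_iff.mpr ⟨⟨0, hm⟩⟩)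
      (fun j : Fin m => ∑ i, prodRev A T j i)
    rw [hi]
    unfold diam
    set b := Finset.univ.sup' Finset.univ_nonempty (x 0)
    set a := Finset.univ.inf' Finset.univ_nonempty (x 0)
    have hbound := fun y hy hy0 => ((prodRev_mulVec_root_le Γ hnn T m Ns root hN0 Nk hNk hdisj A
      (fun t ht i j => (hα i j t ht).1) hmain y hy hy0 T le_rfl).2 i).2
    have hlow := hbound (fun t k => x t k - a)
      (fun t => by ext k; simp [hx, Matrix.mulVec, dotProduct, mul_sub, ← Finset.sum_mul, hrow])
      (fun k => sub_nonneg.2 (Finset.inf'_le _ (Finset.mem_univ k)))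
    have hupp := hbound (fun t k => b - x t k)
      (fun t => by ext k; simp [hx, Matrix.mulVec, dotProduct, mul_sub, ← Finset.sum_mul, hrow])
      (fun k => sub_nonneg.2 (Finset.le_sup' _ (Finset.mem_univ k)))
    simp only [hNT, Finset.mem_univ, forall_const, Matrix.mulVec, dotProduct, mul_sub,
      Finset.sum_sub_distrib, ← Finset.sum_mul] at hlow hupp
    obtain ⟨k, -, hk⟩ := Finset.exists_mem_eq_sup' Finset.univ_nonempty (x T)
    obtain ⟨l, -, hl⟩ := Finset.exists_mem_eq_inf' Finset.univ_nonempty (x T)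
    rw [hk, hl]
    linarith [hlow l, hupp k]
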